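/- For every natural number k there exists a play of the reversible pebble game on 2^k nodes whose final configuration contains node 2^k, and in which every configuration of the play contains at most k + 1 pebbled nodes. -/

import Mathlib

/- Bennett's reversible pebble game on `t` nodes numbered `1, …, t`.
A configuration is a finite set `P` of pebbled node indices (a subset of
`{1, …, t}`).  A legal move toggles the pebbled status of exactly one node
`j` with `1 ≤ j ≤ t`, provided `j = 1` or node `j - 1` is pebbled. -/
def PebbleMove (t : ℕ) (P P' : Finset ℕ) : Prop :=
  ∃ j : ℕ, 1 ≤ j ∧ j ≤ t ∧ (j = 1 ∨ j - 1 ∈ P) ∧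
    P' = (if j ∈ P then P.erase j else insert j P)

/-- A play is a finite sequence of configurations beginning with the empty
configuration, each consecutive pair related by a legal move. -/
def PebblePlay (t : ℕ) (L : List (Finset ℕ)) : Prop :=
  L.head? = some ∅ ∧ L.Chain' (PebbleMove t)

def PebStep (t c : ℕ) (P P' : Finset ℕ) : Prop :=
  PebbleMove t P P' ∧ P.card ≤ c ∧ P'.card ≤ c

theorem PebStep.symm' {t c : ℕ} {P P' : Finset ℕ} (h : PebStep t c P P') :
    PebStep t c P' P := by
  obtain ⟨⟨j, h1, h2, h3, h4⟩, h5, h6⟩ := h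
  refine ⟨⟨j, h1, h2, ?_, ?_⟩, h6, h5⟩
  · rcases h3 with h3 | h3
    · exact Or.inl h3
    · right
      have : j - 1 ≠ j := by omega
      rw [h4]
      split_ifs <;> simp [this, h3]
  · subst h4
    by_cases hj : j ∈ P <;> simp [hj]

theorem PebStep.rsymm {t c : ℕ} {P P' : Finset ℕ}
    (h : Relation.ReflTransGen (PebStep t c) P P') :
    Relation.ReflTransGen (PebStep t c) P' P := by
  induction h with
  | refl => exact .refl
  | tail _ h ih => exact .head h.symm' ih

theorem peb_run (t c k : ℕ) : ∀ (a : ℕ) (P : Finset ℕ), (a = 0 ∨ a ∈ P) →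
    (∀ x ∈ P, a < x → a + 2 ^ k < x) → a + 2 ^ k ≤ t → P.card + k + 1 ≤ c →
    Relation.ReflTransGen (PebStep t c) P (insert (a + 2 ^ k) P) := by
  induction k with
  | zero =>
    intro a P ha hP ht hc
    refine .single ⟨⟨a + 1, by omega, by simpa using ht, ?_, ?_⟩, by omega, ?_⟩
    · rcases ha with ha | ha
      · left; omega
      · right; simpa using ha
    · have : a + 1 ∉ P := fun h => by
        have := hP _ h (by omega)
        simp at this
      simp [this]
    · exact (Finset.card_insert_le _ _).trans (by omega)
  | succ k ih =>
    intro a P ha hP ht hc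
    have hpos : 0 < 2 ^ k := by positivity
    have he : a + 2 ^ (k + 1) = a + 2 ^ k + 2 ^ k := by ring
    rw [he] at ht hP ⊢
    have s1 := ih a P ha (fun x hx h => by have := hP x hx h; omega) (by omega) (by omega)
    have s2 := ih (a + 2 ^ k) (insert (a + 2 ^ k) P) (by simp)
      (fun x hx h => by
        rcases Finset.mem_insert.1 hx with hx | hx
        · omega
        · exact hP x hx (by omega)) ht
      (by have := Finset.card_insert_le (a + 2 ^ k) P; omega)
    have s3 := ih a (insert (a + 2 ^ k + 2 ^ k) P)
      (by rcases ha with ha | ha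
          · exact Or.inl ha
          · exact Or.inr (Finset.mem_insert_of_mem ha))
      (fun x hx h => by
        rcases Finset.mem_insert.1 hx with hx | hx
        · omega
        · have := hP x hx h
          omega) (by omega)
      (by have := Finset.card_insert_le (a + 2 ^ k + 2 ^ k) P; omega)
    rw [Finset.insert_comm] at s3
    exact (s1.trans s2).trans (PebStep.rsymm s3)

theorem peb_list {t c : ℕ} {P Q : Finset ℕ} (hQ : Q.card ≤ c)
    (h : Relation.ReflTransGen (PebStep t c) P Q) :
    ∃ L : List (Finset ℕ), (P :: L).Chain' (PebbleMove t) ∧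
      (P :: L).getLast? = some Q ∧ ∀ R ∈ P :: L, R.card ≤ c := by
  induction h using Relation.ReflTransGen.head_induction_on with
  | refl => exact ⟨[], by simp [List.Chain'], by simp, by simpa using hQ⟩
  | @head P P' h _ ih =>
    obtain ⟨L, h1, h2, h3⟩ := ih
    refine ⟨P' :: L, List.isChain_cons_cons.2 ⟨h.1, h1⟩, by simpa using h2, ?_⟩
    intro R hR
    rcases List.mem_cons.1 hR with rfl | hR
    · exact h.2.1
    · exact h3 R hR

/-- For every `k` there is a play of the reversible pebble game on `2 ^ k`
nodes whose final configuration contains node `2 ^ k`, and in which every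
configuration contains at most `k + 1` pebbled nodes. -/
theorem bennett_pebble_strategy (k : ℕ) :
    ∃ L : List (Finset ℕ), PebblePlay (2 ^ k) L ∧
      (∃ P : Finset ℕ, L.getLast? = some P ∧ 2 ^ k ∈ P) ∧
      ∀ P ∈ L, P.card ≤ k + 1 := by
  have h := peb_run (2 ^ k) (k + 1) k 0 ∅ (Or.inl rfl) (by simp) (by simp) (by simp)
  obtain ⟨L, h1, h2, h3⟩ := peb_list (by simp) h
  exact ⟨∅ :: L, ⟨rfl, h1⟩, ⟨_, h2, by simp⟩, h3⟩
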